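/- Let bmp : ℕ be a bitmap and i : ℕ a bit index with testBit bmp i = true, and let bmp' = bmp ^^^ 2^i be the bitmap with the flag 2^i removed. Then: (1) popCount bmp' + 1 = popCount bmp; and (2) for every j ≠ i with testBit bmp j = true, pos(bmp', j) = pos(bmp, j) if j < i and pos(bmp', j) + 1 = pos(bmp, j) if j > i. Hence removing the array entry at position pos(bmp, i) and shifting later entries down by one yields an array consistent with the updated bitmap, preserving invariants INV2 and INV3. -/

import Mathlib

/-- The number of set bits (population count / bitcount) of a natural number. -/
def popCount (n : ℕ) : ℕ := n.bits.count true

/-- The Ctrie array position of the branch with flag `2^i` in a cnode with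
bitmap `bmp`: the number of set bits of `bmp` strictly below position `i`. -/
def pos (bmp i : ℕ) : ℕ := popCount (bmp &&& (2 ^ i - 1))

/-!
Identify a bitmap with the finite set of its bit indices: its bitcount is the cardinality of this
set, and removing the flag `2 ^ i` erases `i`. The mask defining `pos bmp j` is reduction modulo
`2 ^ j`, which distributes over XOR, and `2 ^ i` reduces to `0` if `j ≤ i` and to itself if `i < j`.
-/

section

variable {n i j : ℕ}

theorem popCount_eq_length_bitIndices (n : ℕ) : popCount n = n.bitIndices.length := by
  induction n using Nat.binaryRec' with
  | zero => simp [popCount]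
  | bit b n hn ih =>
    rw [popCount] at ih
    rw [popCount, Nat.bits_append_bit n b hn]
    cases b <;> simp [ih]

theorem popCount_eq_card_toFinset_bitIndices (n : ℕ) :
    popCount n = n.bitIndices.toFinset.card := by
  rw [popCount_eq_length_bitIndices, List.toFinset_card_of_nodup Nat.bitIndices_nodup]

theorem toFinset_bitIndices_xor_two_pow (h : n.testBit i = true) :
    (n ^^^ 2 ^ i).bitIndices.toFinset = n.bitIndices.toFinset.erase i := by
  ext k
  rcases eq_or_ne k i with rfl | hki
  · simp [h]
  · simp [hki, hki.symm]

theorem popCount_xor_two_pow_add_one (h : n.testBit i = true) :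
    popCount (n ^^^ 2 ^ i) + 1 = popCount n := by
  have hi : i ∈ n.bitIndices.toFinset := List.mem_toFinset.mpr (Nat.mem_bitIndices.mpr h)
  simp only [popCount_eq_card_toFinset_bitIndices, toFinset_bitIndices_xor_two_pow h,
    Finset.card_erase_add_one hi]

theorem pos_eq_popCount_mod (n j : ℕ) : pos n j = popCount (n % 2 ^ j) := by
  rw [pos, Nat.and_two_pow_sub_one_eq_mod]

theorem pos_xor_two_pow_of_le (n : ℕ) (hji : j ≤ i) : pos (n ^^^ 2 ^ i) j = pos n j := by
  have hmod : 2 ^ i % 2 ^ j = 0 := Nat.mod_eq_zero_of_dvd (pow_dvd_pow 2 hji)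
  rw [pos_eq_popCount_mod, Nat.xor_mod_two_pow, hmod, Nat.xor_zero, pos_eq_popCount_mod]

theorem pos_xor_two_pow_add_one_of_lt (h : n.testBit i = true) (hij : i < j) :
    pos (n ^^^ 2 ^ i) j + 1 = pos n j := by
  have hmod : 2 ^ i % 2 ^ j = 2 ^ i := Nat.mod_eq_of_lt (Nat.pow_lt_pow_right one_lt_two hij)
  have hbit : (n % 2 ^ j).testBit i = true := by
    simp only [Nat.testBit_mod_two_pow, hij, h, decide_true, Bool.and_self]
  rw [pos_eq_popCount_mod, Nat.xor_mod_two_pow, hmod, popCount_xor_two_pow_add_one hbit,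
    pos_eq_popCount_mod]

end

theorem pos_remove_flag_general (bmp i : ℕ) (h : bmp.testBit i = true) :
    popCount (bmp ^^^ 2 ^ i) + 1 = popCount bmp ∧
    ∀ j, (j ≤ i → pos (bmp ^^^ 2 ^ i) j = pos bmp j) ∧
      (i < j → pos (bmp ^^^ 2 ^ i) j + 1 = pos bmp j) :=
  ⟨popCount_xor_two_pow_add_one h,
    fun _ => ⟨pos_xor_two_pow_of_le bmp, pos_xor_two_pow_add_one_of_lt h⟩⟩

/-- Removing the flag `2^i` from a bitmap whose `i`-th bit is set: the
bitcount drops by one, and positions of the other set bits are unchanged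
below `i` and shifted down by one above `i`. Hence removing the array entry
at position `pos(bmp, i)` and shifting later entries down by one yields an
array consistent with the updated bitmap, preserving INV2 and INV3. -/
theorem pos_remove_flag (bmp i : ℕ) (h : bmp.testBit i = true) :
    popCount (bmp ^^^ 2 ^ i) + 1 = popCount bmp ∧
    (∀ j, j ≠ i → bmp.testBit j = true →
      (j < i → pos (bmp ^^^ 2 ^ i) j = pos bmp j) ∧
      (j > i → pos (bmp ^^^ 2 ^ i) j + 1 = pos bmp j)) := by
  obtain ⟨hcount, hpos⟩ := pos_remove_flag_general bmp i h
  exact ⟨hcount, fun j _ _ => ⟨fun hji => (hpos j).1 hji.le, (hpos j).2⟩⟩
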